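/- arXiv:2303.08036 — 7 statements merged into one kernel-verified Lean document; each statement's English description precedes it below -/
import Mathlib

section
/- Let α, β, γ ∈ ℝ² with det(α,β) ≠ 0. If |det(γ,α)| ≤ |det(α,β)| and |det(γ,β)| ≤ |det(α,β)|, then γ lies in the convex hull of the four points α+β, α−β, −α+β, −α−β. -/
/-! By Cramer's rule `γ = s • α + t • β` with `s = det(γ,β) / det(α,β)` and
`t = -det(γ,α) / det(α,β)`, and the hypotheses say `|s| ≤ 1` and `|t| ≤ 1`. Hence `α + t • β` and
`-α + t • β` lie on two opposite sides of the parallelogram, and `γ` lies on the segment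
joining them. -/

/-- Any vector whose determinants with a pair `(α,β)` are bounded by `|det(α,β)|`
lies in the parallelogram with vertices `±α±β`. -/
theorem stmt0 (α β γ : ℝ × ℝ)
    (hdet : α.1 * β.2 - α.2 * β.1 ≠ 0)
    (h1 : |γ.1 * α.2 - γ.2 * α.1| ≤ |α.1 * β.2 - α.2 * β.1|)
    (h2 : |γ.1 * β.2 - γ.2 * β.1| ≤ |α.1 * β.2 - α.2 * β.1|) :
    γ ∈ convexHull ℝ ({α + β, α - β, -α + β, -α - β} : Set (ℝ × ℝ)) := by
  obtain ⟨s, hs⟩ : ∃ s, s = (γ.1 * β.2 - γ.2 * β.1) / (α.1 * β.2 - α.2 * β.1) := ⟨_, rfl⟩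
  obtain ⟨t, ht⟩ : ∃ t, t = -(γ.1 * α.2 - γ.2 * α.1) / (α.1 * β.2 - α.2 * β.1) := ⟨_, rfl⟩
  have hs1 : |s| ≤ 1 := by
    rw [hs, abs_div]
    exact div_le_one_of_le₀ h2 (abs_nonneg _)
  have ht1 : |t| ≤ 1 := by
    rw [ht, abs_div, abs_neg]
    exact div_le_one_of_le₀ h1 (abs_nonneg _)
  have hγ : γ = s • α + t • β := by
    ext
    · simp only [Prod.fst_add, Prod.smul_fst, smul_eq_mul, hs, ht]
      rw [div_mul_eq_mul_div, div_mul_eq_mul_div, ← add_div, eq_div_iff hdet]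
      ring
    · simp only [Prod.snd_add, Prod.smul_snd, smul_eq_mul, hs, ht]
      rw [div_mul_eq_mul_div, div_mul_eq_mul_div, ← add_div, eq_div_iff hdet]
      ring
  clear hs ht
  obtain ⟨hsl, hsu⟩ := abs_le.mp hs1
  obtain ⟨htl, htu⟩ := abs_le.mp ht1
  have hc := convex_convexHull ℝ ({α + β, α - β, -α + β, -α - β} : Set (ℝ × ℝ))
  have hsub := subset_convexHull ℝ ({α + β, α - β, -α + β, -α - β} : Set (ℝ × ℝ))
  -- The weights `(1 + t) / 2` and `(1 - t) / 2` express `t` as a convex combination of `1` and `-1`.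
  have hp : α + t • β ∈ convexHull ℝ ({α + β, α - β, -α + β, -α - β} : Set (ℝ × ℝ)) := by
    convert hc (hsub (show α + β ∈ _ by simp)) (hsub (show α - β ∈ _ by simp))
      (show 0 ≤ (1 + t) / 2 by linarith) (show 0 ≤ (1 - t) / 2 by linarith) (by ring) using 1
    module
  have hq : -α + t • β ∈ convexHull ℝ ({α + β, α - β, -α + β, -α - β} : Set (ℝ × ℝ)) := by
    convert hc (hsub (show -α + β ∈ _ by simp)) (hsub (show -α - β ∈ _ by simp))
      (show 0 ≤ (1 + t) / 2 by linarith) (show 0 ≤ (1 - t) / 2 by linarith) (by ring) using 1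
    module
  rw [hγ]
  convert hc hp hq
    (show 0 ≤ (1 + s) / 2 by linarith) (show 0 ≤ (1 - s) / 2 by linarith) (by ring) using 1
  module
end

section
/- Let α, β ∈ ℤ² be primitive vectors with d := |det(α,β)| ≥ 1, and let P ⊆ ℝ² be the convex hull of the four points α+β, α−β, −α+β, −α−β. Then the set of integer points contained in P is finite and has exactly 4d + 5 elements. -/
/-!
By Cramer's rule, an integer point `z` lies in the parallelogram with vertices `±α ± β` iff
`|det(z, β)| ≤ d` and `|det(α, z)| ≤ d` (`mem_parallelogram_iff`). Replacing `β` by `-β` does not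
affect these inequalities, so one may assume `det(α, β) = d > 0`.

As `α` is primitive, it extends to a basis `α, γ` of `ℤ²` with `det(α, γ) = 1`. Writing
`z = tα + mγ` gives `det(α, z) = m` and `det(z, β) = td + mc` with `c = det(γ, β)`; since
`β = -cα + dγ` is primitive, `c` is coprime to `d`. For each of the `2d + 1` values `m ∈ [-d, d]`,
the interval `[-d, d]` contains three integers congruent to `mc` modulo `d` if `d ∣ m`, that is,
if `m ∈ {-d, 0, d}`, and two otherwise (`abs_mul_add_le_iff`). The total is
`2(2d + 1) + 3 = 4d + 5`.
-/

open Pointwise in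
theorem mem_parallelogram_iff (a b c e x y : ℝ) (hD : a * e - b * c ≠ 0) :
    (x, y) ∈ convexHull ℝ
      ({(a + c, b + e), (a - c, b - e), (-a + c, -b + e), (-a - c, -b - e)} : Set (ℝ × ℝ)) ↔
    |x * e - y * c| ≤ |a * e - b * c| ∧ |a * y - b * x| ≤ |a * e - b * c| := by
  have hset : ({(a + c, b + e), (a - c, b - e), (-a + c, -b + e), (-a - c, -b - e)} :
      Set (ℝ × ℝ)) = {(a, b), (-a, -b)} + {(c, e), (-c, -e)} := by
    rw [Set.insert_eq (a, b), Set.union_add, Set.singleton_add, Set.singleton_add,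
      Set.image_pair, Set.image_pair, Set.insert_union, Set.singleton_union]
    simp only [Prod.mk_add_mk, ← sub_eq_add_neg]
  rw [hset, convexHull_add, convexHull_pair, convexHull_pair, Set.mem_add]
  simp only [segment_eq_image, Set.mem_image, exists_exists_and_eq_and, Set.mem_Icc]
  constructor
  · rintro ⟨s, ⟨hs0, hs1⟩, t, ⟨ht0, ht1⟩, h⟩
    simp only [Prod.smul_mk, Prod.mk_add_mk, smul_eq_mul, Prod.mk.injEq] at h
    obtain ⟨rfl, rfl⟩ := h
    have hs : |1 - 2 * s| ≤ 1 := abs_le.2 ⟨by linarith, by linarith⟩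
    have ht : |1 - 2 * t| ≤ 1 := abs_le.2 ⟨by linarith, by linarith⟩
    constructor
    · calc _ = |(1 - 2 * s) * (a * e - b * c)| := by congr 1; ring
        _ ≤ _ := by rw [abs_mul]; exact mul_le_of_le_one_left (abs_nonneg _) hs
    · calc _ = |(1 - 2 * t) * (a * e - b * c)| := by congr 1; ring
        _ ≤ _ := by rw [abs_mul]; exact mul_le_of_le_one_left (abs_nonneg _) ht
  · rintro ⟨h1, h2⟩
    have key : ∀ u : ℝ, |u| ≤ |a * e - b * c| →
        0 ≤ (1 - u / (a * e - b * c)) / 2 ∧ (1 - u / (a * e - b * c)) / 2 ≤ 1 := by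
      intro u hu
      have : |u / (a * e - b * c)| ≤ 1 := by
        rw [abs_div]; exact div_le_one_of_le₀ hu (abs_nonneg _)
      obtain ⟨h, h'⟩ := abs_le.1 this
      constructor <;> linarith
    refine ⟨_, key _ h1, _, key _ h2, ?_⟩
    simp only [Prod.smul_mk, Prod.mk_add_mk, smul_eq_mul, Prod.mk.injEq]
    have hx : (x * e - y * c) / (a * e - b * c) * a +
        (a * y - b * x) / (a * e - b * c) * c = x := by
      rw [div_mul_eq_mul_div, div_mul_eq_mul_div, ← add_div, div_eq_iff hD]
      ring
    have hy : (x * e - y * c) / (a * e - b * c) * b +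
        (a * y - b * x) / (a * e - b * c) * e = y := by
      rw [div_mul_eq_mul_div, div_mul_eq_mul_div, ← add_div, div_eq_iff hD]
      ring
    exact ⟨by linear_combination hx, by linear_combination hy⟩

/-- The solutions `t` of `|td + k| ≤ d` are three or two consecutive integers, according to
whether `d` divides `k`. -/
theorem abs_mul_add_le_iff (d k t : ℤ) (hd : 0 < d) :
    |t * d + k| ≤ d ↔ -1 - k / d ≤ t ∧ t ≤ (if d ∣ k then 1 else 0) - k / d := by
  have h := Int.mul_ediv_add_emod k d
  have hr0 := Int.emod_nonneg k hd.ne'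
  have hr1 := Int.emod_lt_of_pos k hd
  simp only [Int.dvd_iff_emod_eq_zero, abs_le]
  generalize k / d = q at *
  generalize k % d = r at *
  subst h
  constructor
  · rintro ⟨h1, h2⟩
    constructor
    · by_contra hc
      have : t + q + 2 ≤ 0 := by lia
      nlinarith
    · split_ifs with hr
      · by_contra hc
        have : 2 ≤ t + q := by lia
        nlinarith
      · have : 0 < r := by lia
        by_contra hc
        have : 1 ≤ t + q := by lia
        nlinarith
  · rintro ⟨h1, h2⟩
    have h1' : 0 ≤ t + q + 1 := by lia
    split_ifs at h2 with hr
    · have : t + q ≤ 1 := by lia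
      constructor <;> nlinarith
    · have : t + q ≤ 0 := by lia
      constructor <;> nlinarith

theorem card_filter_dvd_Icc (d : ℤ) (hd : 0 < d) :
    ((Finset.Icc (-d) d).filter (fun m => d ∣ m)).card = 3 := by
  have : (Finset.Icc (-d) d).filter (fun m => d ∣ m) = {-d, 0, d} := by
    ext m
    simp only [Finset.mem_filter, Finset.mem_Icc, Finset.mem_insert, Finset.mem_singleton]
    constructor
    · rintro ⟨⟨h1, h2⟩, q, rfl⟩
      have h3 : -1 ≤ q := by by_contra hc; have : q ≤ -2 := by lia
                             nlinarith
      have h4 : q ≤ 1 := by by_contra hc; have : 2 ≤ q := by lia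
                            nlinarith
      interval_cases q <;> simp
    · rintro (rfl | rfl | rfl)
      · simp; lia
      · simp; lia
      · simp; lia
  rw [this, Finset.card_eq_three]
  exact ⟨-d, 0, d, by lia, by lia, by lia, rfl⟩

/-- The count in the coordinates `(m, t)` of `z = tα + mγ`. -/
theorem count_coordinates (d : ℕ) (c : ℤ) (hd : 0 < d) (hc : IsCoprime (d : ℤ) c) :
    {p : ℤ × ℤ | |p.2 * d + p.1 * c| ≤ d ∧ |p.1| ≤ d}.Finite ∧
      {p : ℤ × ℤ | |p.2 * d + p.1 * c| ≤ d ∧ |p.1| ≤ d}.ncard = 4 * d + 5 := by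
  have hd' : (0 : ℤ) < d := by exact_mod_cast hd
  let I : ℤ → Finset ℤ := fun m =>
    Finset.Icc (-1 - m * c / d) ((if (d : ℤ) ∣ m then 1 else 0) - m * c / d)
  let F : Finset (ℤ × ℤ) :=
    ((Finset.Icc (-(d : ℤ)) d).sigma I).map (Equiv.sigmaEquivProd ℤ ℤ).toEmbedding
  have hF : {p : ℤ × ℤ | |p.2 * d + p.1 * c| ≤ d ∧ |p.1| ≤ d} = (F : Set (ℤ × ℤ)) := by
    ext ⟨m, t⟩
    have hdvd : (d : ℤ) ∣ m * c ↔ (d : ℤ) ∣ m :=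
      ⟨hc.dvd_of_dvd_mul_right, fun h => h.mul_right c⟩
    simp only [Set.mem_ofPred_eq, abs_mul_add_le_iff _ _ _ hd', hdvd, F, Finset.coe_map,
      Equiv.coe_toEmbedding, Set.mem_image, Finset.mem_coe, Finset.mem_sigma, I, Finset.mem_Icc,
      abs_le, Sigma.exists, Equiv.sigmaEquivProd_apply, Prod.mk.injEq]
    constructor
    · rintro ⟨h1, h2⟩
      exact ⟨m, t, ⟨h2, h1⟩, rfl, rfl⟩
    · rintro ⟨m₀, t₀, ⟨h2, h1⟩, rfl, rfl⟩
      exact ⟨h1, h2⟩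
  rw [hF]
  refine ⟨F.finite_toSet, ?_⟩
  have hI : ∀ m, (I m).card = 2 + if (d : ℤ) ∣ m then 1 else 0 := by
    intro m
    simp only [I, Int.card_Icc]
    split_ifs <;> lia
  rw [Set.ncard_coe_finset, Finset.card_map, Finset.card_sigma]
  simp only [hI, Finset.sum_add_distrib, Finset.sum_const, ← Finset.card_filter,
    card_filter_dvd_Icc _ hd', Int.card_Icc, smul_eq_mul]
  lia

/-- The count of integer points for a positively oriented pair `(a, b)`, `(p, q)`. -/
theorem count_of_det_pos (a b p q : ℤ) (hα : IsCoprime a b) (hβ : IsCoprime p q)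
    (d : ℕ) (hd : 0 < d) (hD : a * q - b * p = d) :
    {z : ℤ × ℤ | |z.1 * q - z.2 * p| ≤ d ∧ |a * z.2 - b * z.1| ≤ d}.Finite ∧
    {z : ℤ × ℤ | |z.1 * q - z.2 * p| ≤ d ∧ |a * z.2 - b * z.1| ≤ d}.ncard = 4 * d + 5 := by
  obtain ⟨u, v, huv⟩ := hα
  -- The basis of `ℤ²` is `α = (a, b)`, `γ = (-v, u)`, and `c = det(γ, β)`.
  let c : ℤ := -v * q - u * p
  have hp : p = -c * a + d * -v := by
    simp only [c]; linear_combination (-p) * huv - v * hD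
  have hq : q = -c * b + d * u := by
    simp only [c]; linear_combination (-q) * huv + u * hD
  have hc : IsCoprime (d : ℤ) c := by
    obtain ⟨x, y, hxy⟩ := hβ
    refine ⟨-x * v + y * u, -x * a - y * b, ?_⟩
    linear_combination hxy - x * hp - y * hq
  let f : ℤ × ℤ ≃ ℤ × ℤ :=
    { toFun := fun w => (w.2 * a - w.1 * v, w.2 * b + w.1 * u)
      invFun := fun z => (a * z.2 - b * z.1, u * z.1 + v * z.2)
      left_inv := by
        rintro ⟨m, t⟩
        simp only [Prod.mk.injEq]
        constructor
        · linear_combination m * huv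
        · linear_combination t * huv
      right_inv := by
        rintro ⟨x, y⟩
        simp only [Prod.mk.injEq]
        constructor
        · linear_combination x * huv
        · linear_combination y * huv }
  have himg : {z : ℤ × ℤ | |z.1 * q - z.2 * p| ≤ d ∧ |a * z.2 - b * z.1| ≤ d} =
      Set.image f {w : ℤ × ℤ | |w.2 * d + w.1 * c| ≤ d ∧ |w.1| ≤ d} := by
    rw [Equiv.image_eq_preimage_symm]
    ext ⟨x, y⟩
    have h : (u * x + v * y) * d + (a * y - b * x) * c = x * q - y * p := by
      linear_combination -x * hq + y * hp
    simp only [Set.mem_ofPred_eq, Set.mem_preimage, f, Equiv.coe_fn_symm_mk, h]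
  obtain ⟨h1, h2⟩ := count_coordinates d c hd hc
  rw [himg]
  exact ⟨h1.image f, by rw [Set.ncard_image_of_injective _ f.injective, h2]⟩

/-- For primitive `α, β ∈ ℤ²` with `d = |det(α,β)| ≥ 1`, the parallelogram with
vertices `±α±β` contains exactly `4d + 5` integer points. -/
theorem stmt2 (α β : ℤ × ℤ)
    (hα : IsCoprime α.1 α.2) (hβ : IsCoprime β.1 β.2)
    (d : ℕ) (hd : (d : ℤ) = |α.1 * β.2 - α.2 * β.1|) (hd1 : 1 ≤ d)
    (P : Set (ℝ × ℝ))
    (hP : P = convexHull ℝ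
      ({(((α + β).1 : ℝ), ((α + β).2 : ℝ)), (((α - β).1 : ℝ), ((α - β).2 : ℝ)),
        (((-α + β).1 : ℝ), ((-α + β).2 : ℝ)), (((-α - β).1 : ℝ), ((-α - β).2 : ℝ))} :
        Set (ℝ × ℝ))) :
    {z : ℤ × ℤ | ((z.1 : ℝ), (z.2 : ℝ)) ∈ P}.Finite ∧
      {z : ℤ × ℤ | ((z.1 : ℝ), (z.2 : ℝ)) ∈ P}.ncard = 4 * d + 5 := by
  obtain ⟨a, b⟩ := α
  obtain ⟨p, q⟩ := β
  simp only at hα hβ hd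
  have hne : a * q - b * p ≠ 0 := by
    intro h
    rw [h, abs_zero] at hd
    lia
  have hset : {z : ℤ × ℤ | ((z.1 : ℝ), (z.2 : ℝ)) ∈ P} =
      {z : ℤ × ℤ | |z.1 * q - z.2 * p| ≤ d ∧ |a * z.2 - b * z.1| ≤ d} := by
    ext ⟨x, y⟩
    have := mem_parallelogram_iff a b p q x y (by exact_mod_cast hne)
    simp only [Set.mem_ofPred_eq, hP, hd, Prod.mk_add_mk, Prod.mk_sub_mk, Prod.neg_mk]
    push_cast
    rw [this]
    norm_cast
  rw [hset]
  rcases abs_choice (a * q - b * p) with h | h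
  · exact count_of_det_pos a b p q hα hβ d hd1 (by rw [hd, h])
  · have := count_of_det_pos a b (-p) (-q) hα hβ.neg_neg d hd1 (by rw [hd, h]; ring)
    have hneg : ∀ x y : ℤ, |x * -q - y * -p| = |x * q - y * p| := by
      intro x y
      rw [← abs_neg]
      congr 1
      ring
    simpa only [hneg] using this
end

section
/- Let S ⊆ ℤ² be a finite set of primitive vectors and let V be a nonnegative integer such that |det(α,β)| ≤ V for all α, β ∈ S. Then the number of integer points in the convex hull of S (taken in ℝ²) is at most 4V + 5. -/
/-!
Choose `a, b ∈ S` for which `q = det(a, b)` is the largest determinant of a pair from `S`, so that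
`0 ≤ q ≤ V`.

If `q > 0`, every `s ∈ S`, and hence every point `z` of the convex hull, satisfies
`|det(a, z)| ≤ q` and `|det(b, z)| ≤ q`. (The region cut out is the parallelogram with
vertices `±a ± b`.) Its integer points are counted by `z ↦ (det(a, z), ⌊det(b, z) / q⌋)`.
Integer points with the same first entry differ by a multiple of the primitive vector `a`, so
their values of `det(b, ·)` differ by a multiple of `q`; hence the map is injective. The
second entry is `-1`, `0` or `1`, and it is `1` only when `det(b, z) = q`; then `z + a` is a
multiple of the primitive vector `b`, so `q ∣ det(a, z)`. Thus there are at most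
`2 (2q + 1) + 3 = 4q + 5` points (`parallelogram_count`).

If `q = 0`, then `S ⊆ {a, -a}` and the hull has at most three integer points.
-/

/-- An integer linear form bounded in absolute value by `q` on `S` is bounded by `q` on the
integer points of the convex hull of `S`. -/
lemma abs_form_le_of_mem_hull (S : Finset (ℤ × ℤ)) (c d q : ℤ)
    (h : ∀ s ∈ S, |c * s.2 - d * s.1| ≤ q) (z : ℤ × ℤ)
    (hz : ((z.1 : ℝ), (z.2 : ℝ)) ∈
      convexHull ℝ ((fun v : ℤ × ℤ => ((v.1 : ℝ), (v.2 : ℝ))) '' S)) :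
    |c * z.2 - d * z.1| ≤ q := by
  have hconv : Convex ℝ {p : ℝ × ℝ | |(c : ℝ) * p.2 - d * p.1| ≤ q} := by
    intro x hx y hy s t hs ht hst
    simp only [Set.mem_ofPred_eq, abs_le, Prod.fst_add, Prod.snd_add, Prod.smul_fst,
      Prod.smul_snd, smul_eq_mul] at *
    obtain rfl : t = 1 - s := by linarith
    constructor <;> nlinarith [mul_le_mul_of_nonneg_left hx.1 hs, mul_le_mul_of_nonneg_left hx.2 hs,
      mul_le_mul_of_nonneg_left hy.1 ht, mul_le_mul_of_nonneg_left hy.2 ht]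
  have hmem := convexHull_min (s := (fun v : ℤ × ℤ => ((v.1 : ℝ), (v.2 : ℝ))) '' S) (by
    rintro _ ⟨s, hs, rfl⟩
    have := h s hs
    simp only [Set.mem_ofPred_eq]
    exact_mod_cast this) hconv hz
  simp only [Set.mem_ofPred_eq] at hmem
  exact_mod_cast hmem

/-- An integer vector parallel to a primitive vector is an integer multiple of it. -/
lemma exists_multiple_of_det_eq_zero {a z : ℤ × ℤ} (ha : IsCoprime a.1 a.2)
    (h : a.1 * z.2 - a.2 * z.1 = 0) : ∃ k : ℤ, z.1 = k * a.1 ∧ z.2 = k * a.2 := by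
  obtain ⟨u, v, huv⟩ := ha
  refine ⟨u * z.1 + v * z.2, ?_, ?_⟩
  · linear_combination (-z.1) * huv - v * h
  · linear_combination (-z.2) * huv + u * h

/-- The parallelogram with vertices `±a ± b` has at most `4q + 5` integer points, `q = det(a, b)`:
two on each line `det(a, z) = m` with `-q ≤ m ≤ q`, and one more when `m ∈ {-q, 0, q}`. -/
lemma parallelogram_count (a b : ℤ × ℤ) (ha : IsCoprime a.1 a.2) (hb : IsCoprime b.1 b.2)
    (q : ℕ) (hq : 0 < q) (hab : a.1 * b.2 - a.2 * b.1 = q) (T : Set (ℤ × ℤ))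
    (hTa : ∀ z ∈ T, |a.1 * z.2 - a.2 * z.1| ≤ q)
    (hTb : ∀ z ∈ T, |b.1 * z.2 - b.2 * z.1| ≤ q) :
    T.Finite ∧ T.ncard ≤ 4 * q + 5 := by
  have hq' : (0 : ℤ) < q := by exact_mod_cast hq
  let f : ℤ × ℤ → ℤ × ℤ := fun z =>
    (a.1 * z.2 - a.2 * z.1, (b.1 * z.2 - b.2 * z.1) / q)
  let R : Finset (ℤ × ℤ) :=
    Finset.Icc (-(q : ℤ)) q ×ˢ {-1, 0} ∪ ({-(q : ℤ), 0, (q : ℤ)} : Finset ℤ) ×ˢ {1}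
  have hR : R.card ≤ 4 * q + 5 := by
    refine (Finset.card_union_le _ _).trans ?_
    rw [Finset.card_product, Finset.card_product, Int.card_Icc]
    have h3 : ({-(q : ℤ), 0, (q : ℤ)} : Finset ℤ).card ≤ 3 := Finset.card_le_three
    have h2 : ({-1, 0} : Finset ℤ).card = 2 := rfl
    rw [h2, Finset.card_singleton]
    omega
  have hmaps : Set.MapsTo f T R := by
    intro z hz
    have h1 := abs_le.1 (hTa z hz)
    have h2 := abs_le.1 (hTb z hz)
    have hlo : -1 ≤ (b.1 * z.2 - b.2 * z.1) / (q : ℤ) := by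
      rw [Int.le_ediv_iff_mul_le hq']; linarith
    have hhi : (b.1 * z.2 - b.2 * z.1) / (q : ℤ) ≤ 1 := by
      have : (b.1 * z.2 - b.2 * z.1) / (q : ℤ) < 2 := by
        rw [Int.ediv_lt_iff_lt_mul hq']; linarith
      omega
    simp only [R, f, Finset.coe_union, Set.mem_union, Finset.mem_coe, Finset.mem_product,
      Finset.mem_Icc, Finset.mem_insert, Finset.mem_singleton]
    by_cases hc : (b.1 * z.2 - b.2 * z.1) / (q : ℤ) = 1
    · right
      refine ⟨?_, hc⟩
      have hn : b.1 * z.2 - b.2 * z.1 = q := by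
        have := (Int.le_ediv_iff_mul_le hq').1 hc.ge
        linarith [h2.2]
      -- `det(b, z) = q = -det(b, a)`, so `z + a` is parallel to `b`.
      obtain ⟨k, hk1, hk2⟩ := exists_multiple_of_det_eq_zero (z := (z.1 + a.1, z.2 + a.2)) hb
        (by simp only; linear_combination hn - hab)
      simp only at hk1 hk2
      have hm : a.1 * z.2 - a.2 * z.1 = k * q := by
        linear_combination a.1 * hk2 - a.2 * hk1 + k * hab
      rw [hm] at h1 ⊢
      have hk_lo : -1 ≤ k := by nlinarith [h1.1]
      have hk_hi : k ≤ 1 := by nlinarith [h1.2]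
      interval_cases k <;> simp
    · left
      exact ⟨h1, by omega⟩
  have hinj : Set.InjOn f T := by
    intro z _ w _ hzw
    simp only [f, Prod.mk.injEq] at hzw
    obtain ⟨h1, h2⟩ := hzw
    obtain ⟨k, hk1, hk2⟩ := exists_multiple_of_det_eq_zero (z := (z.1 - w.1, z.2 - w.2)) ha
      (by simp only; linear_combination h1)
    simp only at hk1 hk2
    have hn : b.1 * z.2 - b.2 * z.1 = (b.1 * w.2 - b.2 * w.1) + (-k) * q := by
      linear_combination b.1 * hk2 - b.2 * hk1 - k * hab
    rw [hn, Int.add_mul_ediv_right _ _ hq'.ne'] at h2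
    have hk : k = 0 := by omega
    subst hk
    ext <;> linarith
  refine ⟨Set.Finite.of_injOn hmaps hinj R.finite_toSet, ?_⟩
  exact (Set.ncard_le_ncard_of_injOn f hmaps hinj R.finite_toSet).trans
    (by rw [Set.ncard_coe_finset]; exact hR)

/-- The degenerate case: integer points `k a` with `|k| ≤ 1`, where `k` is recovered, up to sign, as the
determinant with a complementary vector `b`. -/
lemma segment_count (a b : ℤ × ℤ) (hab : a.1 * b.2 - a.2 * b.1 = 1) (T : Set (ℤ × ℤ))
    (hTa : ∀ z ∈ T, |a.1 * z.2 - a.2 * z.1| ≤ 0)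
    (hTb : ∀ z ∈ T, |b.1 * z.2 - b.2 * z.1| ≤ 1) :
    T.Finite ∧ T.ncard ≤ 3 := by
  let f : ℤ × ℤ → ℤ := fun z => b.1 * z.2 - b.2 * z.1
  have hmaps : Set.MapsTo f T (Finset.Icc (-1 : ℤ) 1) := by
    intro z hz
    have := abs_le.1 (hTb z hz)
    simpa [f] using this
  have hinj : Set.InjOn f T := by
    intro z hz w hw hzw
    have h1 := abs_nonpos_iff.1 (hTa z hz)
    have h2 := abs_nonpos_iff.1 (hTa w hw)
    simp only [f] at hzw
    ext
    · linear_combination (w.1 - z.1) * hab + b.1 * h1 - b.1 * h2 - a.1 * hzw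
    · linear_combination (w.2 - z.2) * hab + b.2 * h1 - b.2 * h2 - a.2 * hzw
  refine ⟨Set.Finite.of_injOn hmaps hinj (Finset.finite_toSet _), ?_⟩
  exact (Set.ncard_le_ncard_of_injOn f hmaps hinj (Finset.finite_toSet _)).trans
    (by rw [Set.ncard_coe_finset]; decide)

/-- If `S ⊆ ℤ²` is a finite set of primitive vectors with all pairwise determinants
bounded by `V`, then the convex hull of `S` in `ℝ²` contains at most `4V + 5`
integer points. -/
theorem stmt3 (S : Finset (ℤ × ℤ))
    (hprim : ∀ v ∈ S, IsCoprime v.1 v.2)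
    (V : ℕ)
    (hV : ∀ α ∈ S, ∀ β ∈ S, |α.1 * β.2 - α.2 * β.1| ≤ (V : ℤ)) :
    {z : ℤ × ℤ | ((z.1 : ℝ), (z.2 : ℝ)) ∈
        convexHull ℝ ((fun v : ℤ × ℤ => ((v.1 : ℝ), (v.2 : ℝ))) '' S)}.Finite ∧
      {z : ℤ × ℤ | ((z.1 : ℝ), (z.2 : ℝ)) ∈
        convexHull ℝ ((fun v : ℤ × ℤ => ((v.1 : ℝ), (v.2 : ℝ))) '' S)}.ncard ≤ 4 * V + 5 := by
  rcases S.eq_empty_or_nonempty with rfl | hne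
  · simp
  obtain ⟨⟨a, b⟩, hmem, hmax⟩ := Finset.exists_max_image (S ×ˢ S)
    (fun p => p.1.1 * p.2.2 - p.1.2 * p.2.1) (hne.product hne)
  obtain ⟨haS, hbS⟩ := Finset.mem_product.1 hmem
  simp only at haS hbS hmax
  have hle : ∀ s ∈ S, ∀ t ∈ S, |s.1 * t.2 - s.2 * t.1| ≤ a.1 * b.2 - a.2 * b.1 := by
    intro s hs t ht
    have h1 := hmax (s, t) (Finset.mk_mem_product hs ht)
    have h2 := hmax (t, s) (Finset.mk_mem_product ht hs)
    simp only at h1 h2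
    exact abs_le.2 ⟨by linarith, h1⟩
  have hq0 : 0 ≤ a.1 * b.2 - a.2 * b.1 := (abs_nonneg _).trans (hle a haS b hbS)
  obtain ⟨q, hq⟩ := Int.eq_ofNat_of_zero_le hq0
  rw [hq] at hle
  rcases Nat.eq_zero_or_pos q with rfl | hqpos
  · obtain ⟨u, v, huv⟩ := hprim a haS
    have key := segment_count a (-v, u) (by simp only; linear_combination huv) _
      (abs_form_le_of_mem_hull S a.1 a.2 0 fun s hs => by simpa using hle a haS s hs)
      (abs_form_le_of_mem_hull S (-v) u 1 fun s hs => by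
        obtain ⟨k, hk1, hk2⟩ := exists_multiple_of_det_eq_zero (z := s) (hprim a haS)
          (abs_nonpos_iff.1 (by simpa using hle a haS s hs))
        -- `s = k a` is primitive, so `k` is a unit of `ℤ`.
        obtain ⟨x, y, hxy⟩ := hprim s hs
        have hunit : IsUnit k := .of_mul_eq_one (x * a.1 + y * a.2) (by
          rw [hk1, hk2] at hxy; linear_combination hxy)
        have hval : -v * s.2 - u * s.1 = -k := by
          rw [hk1, hk2]; linear_combination (-k) * huv
        rw [hval, abs_neg, Int.isUnit_iff_abs_eq.1 hunit])
    exact ⟨key.1, key.2.trans (by omega)⟩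
  · have key := parallelogram_count a b (hprim a haS) (hprim b hbS) q hqpos hq _
      (abs_form_le_of_mem_hull S a.1 a.2 q fun s hs => hle a haS s hs)
      (abs_form_le_of_mem_hull S b.1 b.2 q fun s hs => hle b hbS s hs)
    have hqV : q ≤ V := by
      have := (le_abs_self _).trans (hV a haS b hbS)
      rw [hq] at this
      exact_mod_cast this
    exact ⟨key.1, key.2.trans (by omega)⟩
end

section
/- Let N be a norm on ℝ² and let α, β ∈ ℝ² be linearly independent. Then the point (α+β)/N(α+β) lies on the segment joining α/N(α) and β/N(β) if and only if N(α+β) = N(α) + N(β). -/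
/-!
By linear independence, `(α + β) / N (α + β) = a • α / N α + b • β / N β` holds exactly when
`a = N α / N (α + β)` and `b = N β / N (α + β)`. These coefficients are nonnegative, so the point
lies on the segment iff `a + b = 1`, that is, iff `N α + N β = N (α + β)`.
-/

/-- For a norm `N` on `ℝ²` and linearly independent `α, β`, the normalized mediant
`(α+β)/N(α+β)` lies on the segment joining `α/N(α)` and `β/N(β)` iff
`N(α+β) = N(α) + N(β)`. -/
theorem stmt4 (N : ℝ × ℝ → ℝ)
    (hsep : ∀ x, N x = 0 ↔ x = 0)
    (hhom : ∀ (c : ℝ) (x : ℝ × ℝ), N (c • x) = |c| * N x)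
    (htri : ∀ x y, N (x + y) ≤ N x + N y)
    (α β : ℝ × ℝ) (hli : LinearIndependent ℝ ![α, β]) :
    (N (α + β))⁻¹ • (α + β) ∈ segment ℝ ((N α)⁻¹ • α) ((N β)⁻¹ • β) ↔
      N (α + β) = N α + N β := by
  -- Nonnegativity follows from `0 = N (x - x) ≤ 2 * N x`.
  have hpos : ∀ x, x ≠ 0 → 0 < N x := by
    intro x hx
    have h1 := htri x ((-1 : ℝ) • x)
    have h2 : x + (-1 : ℝ) • x = 0 := by simp
    rw [h2, (hsep 0).2 rfl, hhom] at h1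
    have h3 : N x ≠ 0 := fun h => hx ((hsep x).1 h)
    have h4 : 0 ≤ N x := by
      norm_num at h1
      linarith
    exact lt_of_le_of_ne h4 h3.symm
  rw [LinearIndependent.pair_iff] at hli
  have hα : 0 < N α := hpos α fun h => by
    simpa using (hli 1 0 (by simp [h])).1
  have hβ : 0 < N β := hpos β fun h => by
    simpa using (hli 0 1 (by simp [h])).2
  have hs : 0 < N (α + β) := hpos _ fun h => by
    simpa using (hli 1 1 (by simpa using h)).1
  constructor
  · rintro ⟨a, b, -, -, hab, h⟩
    obtain ⟨h1, h2⟩ := hli (a * (N α)⁻¹ - (N (α + β))⁻¹) (b * (N β)⁻¹ - (N (α + β))⁻¹) (by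
      rw [← sub_eq_zero] at h
      rw [← h]
      module)
    field_simp at h1 h2
    -- Now `a * N (α + β) = N α` and `b * N (α + β) = N β`; add them.
    linear_combination h1 + h2 - N (α + β) * hab
  · intro h
    refine ⟨N α / N (α + β), N β / N (α + β), by positivity, by positivity, ?_, ?_⟩
    · rw [← add_div, ← h, div_self hs.ne']
    · rw [smul_smul, smul_smul, smul_add]
      congr 2 <;> field_simp
end

section
/- Let α, β ∈ ℤ² with det(α,β) = 1, let C = {mα + nβ : m ∈ ℤ≥0, n ∈ ℤ>0}, and let N be a norm on ℝ² satisfying N(sα + tβ) = s·N(α) + t·N(β) for all reals s, t ≥ 0. Let λ ∈ ℝ and suppose γ ∈ C satisfies N(γ) > λ and N(γ) ≤ N(δ) for every δ ∈ C with N(δ) > λ. Then at least one of the following holds: (i) γ − α ∈ C and N(γ − α) ≤ λ; (ii) γ − β ∈ C and N(γ − β) ≤ λ; (iii) γ = β. -/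
/-!
Write `γ = m α + n β` with `m ≥ 0` and `n > 0`. Since `N` is linear on the cone and `N α, N β > 0`,
subtracting a generator strictly decreases the norm as long as the result stays in the cone, and by
minimality of `γ` such a smaller point must have norm at most `lam`. If `m > 0`, the point `γ - α`
lies in `C`; if `m = 0` and `n > 1`, the point `γ - β` does; otherwise `γ = β`.
-/

/-- In a half-open unimodular cone on which a norm is linear, the unswept lattice
point of smallest norm is obtained from an already swept point (or is the
generator `β` itself). -/
theorem stmt8 (α β : ℤ × ℤ) (hdet : α.1 * β.2 - α.2 * β.1 = 1)
    (C : Set (ℤ × ℤ))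
    (hC : C = {γ | ∃ m n : ℤ, 0 ≤ m ∧ 0 < n ∧ γ = m • α + n • β})
    (N : ℝ × ℝ → ℝ)
    (hsep : ∀ x, N x = 0 ↔ x = 0)
    (hhom : ∀ (c : ℝ) (x : ℝ × ℝ), N (c • x) = |c| * N x)
    (htri : ∀ x y, N (x + y) ≤ N x + N y)
    (hlin : ∀ s t : ℝ, 0 ≤ s → 0 ≤ t →
      N (s • (((α.1 : ℝ), (α.2 : ℝ)) : ℝ × ℝ) + t • (((β.1 : ℝ), (β.2 : ℝ)) : ℝ × ℝ)) =
        s * N ((α.1 : ℝ), (α.2 : ℝ)) + t * N ((β.1 : ℝ), (β.2 : ℝ)))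
    (lam : ℝ) (γ : ℤ × ℤ) (hγC : γ ∈ C)
    (hγ : N ((γ.1 : ℝ), (γ.2 : ℝ)) > lam)
    (hmin : ∀ δ ∈ C, N ((δ.1 : ℝ), (δ.2 : ℝ)) > lam →
      N ((γ.1 : ℝ), (γ.2 : ℝ)) ≤ N ((δ.1 : ℝ), (δ.2 : ℝ))) :
    (γ - α ∈ C ∧ N (((γ - α).1 : ℝ), ((γ - α).2 : ℝ)) ≤ lam) ∨
    (γ - β ∈ C ∧ N (((γ - β).1 : ℝ), ((γ - β).2 : ℝ)) ≤ lam) ∨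
    γ = β := by
  have hpos : ∀ x, x ≠ 0 → 0 < N x := by
    intro x hx
    have hneg : N (-x) = N x := by simpa using hhom (-1) x
    have hsum := htri x (-x)
    rw [add_neg_cancel, (hsep 0).2 rfl, hneg] at hsum
    exact lt_of_le_of_ne (by linarith) fun h => hx ((hsep x).1 h.symm)
  -- A generator with both coordinates zero would make the determinant vanish.
  have hα : 0 < N ((α.1 : ℝ), (α.2 : ℝ)) := hpos _ fun h => by
    simp only [Prod.mk_eq_zero, Int.cast_eq_zero] at h
    simp [h.1, h.2] at hdet
  have hβ : 0 < N ((β.1 : ℝ), (β.2 : ℝ)) := hpos _ fun h => by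
    simp only [Prod.mk_eq_zero, Int.cast_eq_zero] at h
    simp [h.1, h.2] at hdet
  have hN : ∀ (δ : ℤ × ℤ) (m n : ℤ), 0 ≤ m → 0 ≤ n → δ = m • α + n • β →
      N ((δ.1 : ℝ), (δ.2 : ℝ)) =
        m * N ((α.1 : ℝ), (α.2 : ℝ)) + n * N ((β.1 : ℝ), (β.2 : ℝ)) := by
    rintro δ m n hm hn rfl
    rw [← hlin m n (by exact_mod_cast hm) (by exact_mod_cast hn)]
    simp
  have hswept : ∀ δ ∈ C, N ((δ.1 : ℝ), (δ.2 : ℝ)) < N ((γ.1 : ℝ), (γ.2 : ℝ)) →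
      N ((δ.1 : ℝ), (δ.2 : ℝ)) ≤ lam := fun δ hδ hlt =>
    le_of_not_gt fun h => absurd (hmin δ hδ h) (not_le.2 hlt)
  subst hC
  obtain ⟨m, n, hm, hn, hγeq⟩ := hγC
  have hNγ := hN γ m n hm hn.le hγeq
  rcases hm.lt_or_eq with hm' | rfl
  · have heq : γ - α = (m - 1) • α + n • β := by rw [hγeq, sub_smul, one_smul]; abel
    have hmem : γ - α ∈ {γ | ∃ m n : ℤ, 0 ≤ m ∧ 0 < n ∧ γ = m • α + n • β} :=
      ⟨m - 1, n, by lia, hn, heq⟩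
    refine Or.inl ⟨hmem, hswept _ hmem ?_⟩
    rw [hN _ _ _ (by lia) hn.le heq, hNγ]
    push_cast
    linarith
  · rcases (show 1 ≤ n from hn).lt_or_eq with hn' | rfl
    · have heq : γ - β = (0 : ℤ) • α + (n - 1) • β := by rw [hγeq, sub_smul, one_smul]; abel
      have hmem : γ - β ∈ {γ | ∃ m n : ℤ, 0 ≤ m ∧ 0 < n ∧ γ = m • α + n • β} :=
        ⟨0, n - 1, le_rfl, by lia, heq⟩
      refine Or.inr (Or.inl ⟨hmem, hswept _ hmem ?_⟩)
      rw [hN _ _ _ le_rfl (by lia) heq, hNγ]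
      push_cast
      linarith
    · exact Or.inr (Or.inr (by simpa using hγeq))
end

section
/- Let t ≥ 1 and let v₁, …, v_t ∈ ℤ² (indices taken modulo t, so v_{t+1} = v₁) satisfy det(v_i, v_{i+1}) = 1 for all i. Suppose the half-open cones C_i = {m·v_i + n·v_{i+1} : m ∈ ℤ≥0, n ∈ ℤ>0} are pairwise disjoint and their union is ℤ² ∖ {0}. Let N be a norm on ℝ² such that N(s·v_i + t'·v_{i+1}) = s·N(v_i) + t'·N(v_{i+1}) for all i and all reals s, t' ≥ 0, and write λ_i = N(v_i). Then for every real s > 0, the family (exp(−s·N(α)))_{α ∈ ℤ²∖{0}} is summable and ∑_{α ∈ ℤ²∖{0}} exp(−s·N(α)) = ∑_{i=1}^{t} exp(−s·λ_{i+1}) / ((1 − exp(−s·λ_i))·(1 − exp(−s·λ_{i+1}))). -/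
/-!
Each half-open cone `C i` is the injective image of `ℕ × ℕ` under
`(m, n) ↦ m • v i + (n + 1) • v (i + 1)`, injectivity being Cramer's rule for a basis of
determinant one. Since `N` is linear on the cone, the sum of `exp (-s N)` over `C i` is a product
of two geometric series with ratios `exp (-s λᵢ)` and `exp (-s λᵢ₊₁)`, both less than `1` because
a norm is positive on the nonzero vectors `v i`. The finitely many cones partition `ℤ² ∖ {0}`, so
adding these sums gives the claim.
-/

/-- Product of two geometric series, the second one starting at exponent one. -/
lemma hasSum_geometric_prod {x y : ℝ} (hx0 : 0 ≤ x) (hx1 : x < 1) (hy0 : 0 ≤ y) (hy1 : y < 1) :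
    HasSum (fun p : ℕ × ℕ => x ^ p.1 * (y ^ p.2 * y)) (y / ((1 - x) * (1 - y))) := by
  have hx := hasSum_geometric_of_lt_one hx0 hx1
  have hy := (hasSum_geometric_of_lt_one hy0 hy1).mul_right y
  have hxy := hx.mul hy (hx.summable.mul_of_nonneg hy.summable
    (fun n => pow_nonneg hx0 n) (fun n => mul_nonneg (pow_nonneg hy0 n) hy0))
  have hval : y / ((1 - x) * (1 - y)) = (1 - x)⁻¹ * ((1 - y)⁻¹ * y) := by
    rw [div_eq_mul_inv, mul_inv]
    ring
  rw [hval]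
  exact hxy

/-- Coordinates with respect to a pair of vectors of determinant one are unique. -/
lemma cone_param_injective {u w : ℤ × ℤ} (hdet : u.1 * w.2 - u.2 * w.1 = 1) :
    Function.Injective (fun p : ℕ × ℕ => (p.1 : ℤ) • u + ((p.2 : ℤ) + 1) • w) := by
  rintro ⟨m, n⟩ ⟨m', n'⟩ h
  have h1 : (m : ℤ) * u.1 + (n + 1) * w.1 = m' * u.1 + (n' + 1) * w.1 := by
    simpa using congrArg Prod.fst h
  have h2 : (m : ℤ) * u.2 + (n + 1) * w.2 = m' * u.2 + (n' + 1) * w.2 := by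
    simpa using congrArg Prod.snd h
  have hm : (m : ℤ) = m' := by
    linear_combination w.2 * h1 - w.1 * h2 - ((m : ℤ) - m') * hdet
  have hn : (n : ℤ) = n' := by
    linear_combination u.1 * h2 - u.2 * h1 - ((n : ℤ) - n') * hdet
  exact Prod.ext (by exact_mod_cast hm) (by exact_mod_cast hn)

lemma cone_eq_range (u w : ℤ × ℤ) :
    {γ : ℤ × ℤ | ∃ m n : ℤ, 0 ≤ m ∧ 0 < n ∧ γ = m • u + n • w} =
      Set.range (fun p : ℕ × ℕ => (p.1 : ℤ) • u + ((p.2 : ℤ) + 1) • w) := by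
  ext γ
  constructor
  · rintro ⟨m, n, hm, hn, rfl⟩
    refine ⟨(m.toNat, (n - 1).toNat), ?_⟩
    have h1 : ((m.toNat : ℕ) : ℤ) = m := Int.toNat_of_nonneg hm
    have h2 : (((n - 1).toNat : ℕ) : ℤ) = n - 1 := Int.toNat_of_nonneg (by lia)
    simp only [h1, h2, sub_add_cancel]
  · rintro ⟨p, rfl⟩
    exact ⟨p.1, p.2 + 1, by positivity, by positivity, rfl⟩

/-- The Dirichlet series of a polyhedral norm that is linear on a fan of half-open
unimodular cones partitioning `ℤ² ∖ {0}` is a finite sum of explicit rational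
expressions in the exponentials `exp(−sλᵢ)`. -/
theorem stmt12 (t : ℕ) (ht : 1 ≤ t) (v : ℕ → ℤ × ℤ)
    (hper : ∀ i, v (i + t) = v i)
    (hdet : ∀ i, (v i).1 * (v (i + 1)).2 - (v i).2 * (v (i + 1)).1 = 1)
    (C : ℕ → Set (ℤ × ℤ))
    (hC : ∀ i, C i = {γ | ∃ m n : ℤ, 0 ≤ m ∧ 0 < n ∧ γ = m • v i + n • v (i + 1)})
    (hdisj : ∀ i < t, ∀ j < t, i ≠ j → Disjoint (C i) (C j))
    (hunion : (⋃ i ∈ Finset.range t, C i) = ({0}ᶜ : Set (ℤ × ℤ)))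
    (N : ℝ × ℝ → ℝ)
    (hsep : ∀ x, N x = 0 ↔ x = 0)
    (hhom : ∀ (c : ℝ) (x : ℝ × ℝ), N (c • x) = |c| * N x)
    (htri : ∀ x y, N (x + y) ≤ N x + N y)
    (hlin : ∀ i, ∀ a b : ℝ, 0 ≤ a → 0 ≤ b →
      N (a • ((((v i).1 : ℝ), ((v i).2 : ℝ)) : ℝ × ℝ) +
          b • ((((v (i + 1)).1 : ℝ), ((v (i + 1)).2 : ℝ)) : ℝ × ℝ)) =
        a * N (((v i).1 : ℝ), ((v i).2 : ℝ)) +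
          b * N (((v (i + 1)).1 : ℝ), ((v (i + 1)).2 : ℝ)))
    (s : ℝ) (hs : 0 < s) :
    Summable (fun γ : {γ : ℤ × ℤ // γ ≠ 0} =>
      Real.exp (-s * N ((γ.1.1 : ℝ), (γ.1.2 : ℝ)))) ∧
    ∑' γ : {γ : ℤ × ℤ // γ ≠ 0}, Real.exp (-s * N ((γ.1.1 : ℝ), (γ.1.2 : ℝ))) =
      ∑ i ∈ Finset.range t,
        Real.exp (-s * N (((v (i + 1)).1 : ℝ), ((v (i + 1)).2 : ℝ))) /
          ((1 - Real.exp (-s * N (((v i).1 : ℝ), ((v i).2 : ℝ)))) *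
            (1 - Real.exp (-s * N (((v (i + 1)).1 : ℝ), ((v (i + 1)).2 : ℝ))))) := by
  have hpos : ∀ x : ℝ × ℝ, x ≠ 0 → 0 < N x := by
    intro x hx
    have h1 := htri x ((-1 : ℝ) • x)
    have h2 : N (x + (-1 : ℝ) • x) = 0 := (hsep _).2 (by simp)
    have h3 := hhom (-1) x
    simp only [abs_neg, abs_one, one_mul] at h3
    have h4 : N x ≠ 0 := fun h => hx ((hsep x).1 h)
    exact lt_of_le_of_ne (by linarith) h4.symm
  have hvpos : ∀ i, 0 < N (((v i).1 : ℝ), ((v i).2 : ℝ)) := by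
    intro i
    apply hpos
    intro h
    simp only [Prod.mk_eq_zero, Int.cast_eq_zero] at h
    have := hdet i
    simp [h.1, h.2] at this
  have hexp : ∀ i, Real.exp (-s * N (((v i).1 : ℝ), ((v i).2 : ℝ))) < 1 := by
    intro i
    rw [Real.exp_lt_one_iff]
    nlinarith [mul_pos hs (hvpos i)]
  let f : ℤ × ℤ → ℝ := fun γ => Real.exp (-s * N ((γ.1 : ℝ), (γ.2 : ℝ)))
  have hcone : ∀ i ∈ Finset.range t, HasSum (f ∘ (↑) : C i → ℝ)
      (Real.exp (-s * N (((v (i + 1)).1 : ℝ), ((v (i + 1)).2 : ℝ))) /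
          ((1 - Real.exp (-s * N (((v i).1 : ℝ), ((v i).2 : ℝ)))) *
            (1 - Real.exp (-s * N (((v (i + 1)).1 : ℝ), ((v (i + 1)).2 : ℝ)))))) := by
    intro i _
    rw [hC i, cone_eq_range]
    refine (cone_param_injective (hdet i)).hasSum_range_iff.2 ?_
    convert hasSum_geometric_prod (Real.exp_nonneg _) (hexp i) (Real.exp_nonneg _)
      (hexp (i + 1)) using 1
    funext p
    have h := hlin i (p.1 : ℝ) ((p.2 : ℝ) + 1) (by positivity) (by positivity)
    simp only [Prod.smul_mk, Prod.mk_add_mk, smul_eq_mul] at h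
    simp only [f, Prod.fst_add, Prod.snd_add, Prod.smul_fst, Prod.smul_snd, smul_eq_mul,
      Function.comp_apply]
    push_cast
    rw [h, ← Real.exp_nat_mul, ← Real.exp_nat_mul, ← Real.exp_add, ← Real.exp_add]
    congr 1
    ring
  have hdis : ((Finset.range t : Finset ℕ) : Set ℕ).Pairwise (Function.onFun Disjoint C) := by
    intro i hi j hj hij
    exact hdisj i (by simpa using hi) j (by simpa using hj) hij
  have hall := hasSum_sum_disjoint (Finset.range t) hdis hcone
  rw [hunion] at hall
  have hall' : HasSum (fun γ : {γ : ℤ × ℤ // γ ≠ 0} =>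
      Real.exp (-s * N ((γ.1.1 : ℝ), (γ.1.2 : ℝ)))) _ := hall
  exact ⟨hall'.summable, hall'.tsum_eq⟩
end

section
/- Let N be a norm on ℝ² and let α, β ∈ ℝ² be linearly independent vectors with N(α+β) = N(α) + N(β). Then no point of the open cone {sα + tβ : s > 0, t > 0} is an extreme point of the unit ball B = {x ∈ ℝ² : N(x) ≤ 1}. -/
/-!
Additivity of `N` at `α, β` propagates to the whole cone: `N (s α + t β) = s N α + t N β` for
`s, t ≥ 0`. So a point `p = s α + t β` of the unit ball with `s, t > 0` satisfies
`w := s N α + t N β ≤ 1`, and it lies strictly between `(w / N α) α` and `(w / N β) β`, both of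
norm `w ≤ 1`. By linear independence these differ from `p`, so `p` is not extreme.
-/

/-- The lower bound half of additivity of `N` on the cone. It is not symmetric in `α, β`: the
remaining case `s ≤ t` follows by exchanging the two vectors. -/
lemma cone_lower_bound (N : ℝ × ℝ → ℝ)
    (hhom : ∀ (c : ℝ) (x : ℝ × ℝ), N (c • x) = |c| * N x)
    (htri : ∀ x y, N (x + y) ≤ N x + N y)
    (α β : ℝ × ℝ) (hadd : N (α + β) = N α + N β)
    (s t : ℝ) (hs : 0 < s) (hst : t ≤ s) :
    s * N α + t * N β ≤ N (s • α + t • β) := by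
  have h := htri (s • α + t • β) ((s - t) • β)
  have e : s • α + t • β + (s - t) • β = s • (α + β) := by module
  rw [e, hhom, hhom, hadd, abs_of_pos hs, abs_of_nonneg (sub_nonneg.2 hst)] at h
  linarith

/-- If a norm `N` on `ℝ²` is additive at linearly independent `α, β`, then no point
of the open cone spanned by `α` and `β` is an extreme point of the unit ball. -/
theorem stmt16 (N : ℝ × ℝ → ℝ)
    (hsep : ∀ x, N x = 0 ↔ x = 0)
    (hhom : ∀ (c : ℝ) (x : ℝ × ℝ), N (c • x) = |c| * N x)
    (htri : ∀ x y, N (x + y) ≤ N x + N y)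
    (α β : ℝ × ℝ) (hli : LinearIndependent ℝ ![α, β])
    (hadd : N (α + β) = N α + N β)
    (s t : ℝ) (hs : 0 < s) (ht : 0 < t) :
    s • α + t • β ∉ Set.extremePoints ℝ {x : ℝ × ℝ | N x ≤ 1} := by
  intro hp
  have hpos : ∀ x, x ≠ 0 → 0 < N x := by
    intro x hx
    have h0 : N 0 = 0 := (hsep 0).2 rfl
    have h1 := htri x ((-1 : ℝ) • x)
    have e : x + (-1 : ℝ) • x = 0 := by module
    rw [e, h0, hhom, abs_neg, abs_one] at h1
    have h2 : N x ≠ 0 := fun h => hx ((hsep x).1 h)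
    exact lt_of_le_of_ne (by linarith) h2.symm
  have ha : 0 < N α := hpos α (by simpa using hli.ne_zero 0)
  have hb : 0 < N β := hpos β (by simpa using hli.ne_zero 1)
  have hlow : s * N α + t * N β ≤ N (s • α + t • β) := by
    rcases le_total t s with h | h
    · exact cone_lower_bound N hhom htri α β hadd s t hs h
    · have := cone_lower_bound N hhom htri β α (by rw [add_comm, hadd, add_comm]) t s ht h
      rw [add_comm (s • α)]
      linarith
  have hp1 : N (s • α + t • β) ≤ 1 := hp.1
  obtain ⟨w, hw⟩ : ∃ w, w = s * N α + t * N β := ⟨_, rfl⟩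
  have hw0 : 0 < w := by rw [hw]; positivity
  have hball : ∀ x, 0 < N x → (w / N x) • x ∈ {x : ℝ × ℝ | N x ≤ 1} := by
    intro x hx
    rw [Set.mem_setOf_eq, hhom, abs_of_pos (by positivity), div_mul_cancel₀ _ hx.ne']
    linarith
  have hseg : s • α + t • β ∈ openSegment ℝ ((w / N α) • α) ((w / N β) • β) := by
    refine ⟨s * N α / w, t * N β / w, by positivity, by positivity, ?_, ?_⟩
    · rw [← add_div, ← hw, div_self hw0.ne']
    · rw [smul_smul, smul_smul]
      congr 2 <;> field_simp
  have heq : (w / N α) • α = s • α + t • β := hp.2 (hball α ha) (hball β hb) hseg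
  have := (LinearIndependent.pair_iff.1 hli (s - w / N α) t (by rw [sub_smul, heq]; module)).2
  exact ht.ne' this
end
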